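/- arXiv:2307.12720 — 2 statements merged into one kernel-verified Lean document; each statement's English description precedes it below -/
import Mathlib

section
/- For every m ≥ 1, the number of OT-admissible words of length m whose leftmost symbol lies in B1 = {0,1,4,5} equals N8(m)/2, and the number of OT-admissible words of length m whose leftmost symbol lies in B2 = {2,3,6,7} also equals N8(m)/2. -/
namespace OTLOCO

def B1 : Finset (Fin 8) := {0, 1, 4, 5}
def B2 : Finset (Fin 8) := {2, 3, 6, 7}

def OTpair (a b : Fin 8) : Prop :=
  (a = 2 ∧ b ∈ B1) ∨ (a ∈ B1 ∧ b = 2) ∨ (a = 5 ∧ b ∈ B2) ∨ (a ∈ B2 ∧ b = 5)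

def OTtriple (a x b : Fin 8) : Prop :=
  (a ∈ ({0, 1, 4} : Finset (Fin 8)) ∧ x ∈ ({3, 6} : Finset (Fin 8)) ∧
    b ∈ ({0, 1, 4} : Finset (Fin 8))) ∨
  (a ∈ ({3, 6, 7} : Finset (Fin 8)) ∧ x ∈ ({1, 4} : Finset (Fin 8)) ∧
    b ∈ ({3, 6, 7} : Finset (Fin 8)))

instance (a b : Fin 8) : Decidable (OTpair a b) := by unfold OTpair; infer_instance
instance (a x b : Fin 8) : Decidable (OTtriple a x b) := by unfold OTtriple; infer_instance

/-- A word `w : Fin m → Fin 8` (index `0` is the leftmost symbol) is OT-admissible. -/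
def OTadm {m : ℕ} (w : Fin m → Fin 8) : Prop :=
  (∀ i j : Fin m, (j : ℕ) = (i : ℕ) + 1 → ¬ OTpair (w i) (w j)) ∧
  (∀ i j k : Fin m, (j : ℕ) = (i : ℕ) + 1 → (k : ℕ) = (i : ℕ) + 2 →
    ¬ OTtriple (w i) (w j) (w k))

instance {m : ℕ} : DecidablePred (@OTadm m) := fun w => by
  unfold OTadm; infer_instance

/-- Number of OT-admissible words of length `m`, with the convention `N8 0 = 2`. -/
def N8 (m : ℕ) : ℕ :=
  if m = 0 then 2
  else (Finset.univ.filter (fun w : Fin m → Fin 8 => OTadm w)).card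

/-!
The reversal `ℓ ↦ 7 - ℓ` of the levels exchanges `B1` and `B2` and leaves the forbidden set
invariant. Applied to each symbol of a word it permutes the admissible words, and the symbol at any
given position changes class; so each class occurs at that position in exactly half of them.
-/

theorem two_mul_card_filter_eq_card_of_perm {α : Type*} (s : Finset α) (p : α → Prop)
    [DecidablePred p] (e : Equiv.Perm α) (mem_iff : ∀ a, e a ∈ s ↔ a ∈ s)
    (swap : ∀ a ∈ s, p (e a) ↔ ¬ p a) :
    2 * (s.filter p).card = s.card := by
  have card_not : (s.filter fun a => ¬ p a).card = (s.filter p).card :=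
    Finset.card_equiv e fun a => by
      simp only [Finset.mem_filter, mem_iff]
      exact and_congr_right fun ha => (swap a ha).symm
  rw [two_mul, ← s.card_filter_add_card_filter_not p, card_not]

theorem OTpair_rev : ∀ a b : Fin 8, OTpair a.rev b.rev ↔ OTpair a b := by decide

theorem OTtriple_rev : ∀ a x b : Fin 8, OTtriple a.rev x.rev b.rev ↔ OTtriple a x b := by decide

theorem rev_mem_B1_iff : ∀ a : Fin 8, a.rev ∈ B1 ↔ a ∉ B1 := by decide

theorem rev_mem_B2_iff : ∀ a : Fin 8, a.rev ∈ B2 ↔ a ∉ B2 := by decide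

theorem OTadm_rev {m : ℕ} (w : Fin m → Fin 8) : OTadm (fun i => (w i).rev) ↔ OTadm w := by
  simp only [OTadm, OTpair_rev, OTtriple_rev]

theorem N8_of_ne_zero {m : ℕ} (hm : m ≠ 0) :
    N8 m = (Finset.univ.filter (fun w : Fin m → Fin 8 => OTadm w)).card :=
  if_neg hm

theorem card_OTadm_and_mem_eq_half {m : ℕ} (i : Fin m) {B : Finset (Fin 8)}
    (hB : ∀ a : Fin 8, a.rev ∈ B ↔ a ∉ B) :
    ((Finset.univ.filter (fun w : Fin m → Fin 8 => OTadm w ∧ w i ∈ B)).card : ℚ) =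
      (N8 m : ℚ) / 2 := by
  have two_mul_card :
      2 * (Finset.univ.filter (fun w : Fin m → Fin 8 => OTadm w ∧ w i ∈ B)).card = N8 m := by
    rw [N8_of_ne_zero i.pos.ne', ← Finset.filter_filter]
    refine two_mul_card_filter_eq_card_of_perm _ _ (Equiv.piCongrRight fun _ => Fin.revPerm)
      (fun w => ?_) (fun w _ => hB (w i))
    rw [Finset.mem_filter_univ, Finset.mem_filter_univ]
    exact OTadm_rev w
  rw [← two_mul_card, Nat.cast_mul, Nat.cast_ofNat, mul_div_cancel_left₀ _ two_ne_zero]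

theorem leftmost_in_B1_B2_counts_general {m : ℕ} (i : Fin m) :
    (((Finset.univ.filter (fun w : Fin m → Fin 8 =>
        OTadm w ∧ w i ∈ B1)).card : ℚ) = (N8 m : ℚ) / 2) ∧
    (((Finset.univ.filter (fun w : Fin m → Fin 8 =>
        OTadm w ∧ w i ∈ B2)).card : ℚ) = (N8 m : ℚ) / 2) :=
  ⟨card_OTadm_and_mem_eq_half i rev_mem_B1_iff, card_OTadm_and_mem_eq_half i rev_mem_B2_iff⟩

theorem leftmost_in_B1_B2_counts (m : ℕ) (hm : 1 ≤ m) :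
    (((Finset.univ.filter (fun w : Fin m → Fin 8 =>
        OTadm w ∧ w ⟨0, hm⟩ ∈ B1)).card : ℚ) = (N8 m : ℚ) / 2) ∧
    (((Finset.univ.filter (fun w : Fin m → Fin 8 =>
        OTadm w ∧ w ⟨0, hm⟩ ∈ B2)).card : ℚ) = (N8 m : ℚ) / 2) :=
  leftmost_in_B1_B2_counts_general ⟨0, hm⟩

end OTLOCO
end

section
/- The finite-length rate of OT-LOCO codes converges to the capacity: lim_{m→∞} (⌊log₂ N8(m)⌋ + 3)/(m + 2) = log₂((5 + 3√5)/2). -/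
namespace OTLOCO

/-!
The number of letters that can be put in front of an admissible word depends only on its first two
letters: it is `4` or `7`. Prepending a letter to a word of the first kind gives `1` word of the
first kind and `3` of the second; prepending to a word of the second kind gives `3` and `4`. So the
transfer matrix has the quotient `!![1, 3; 3, 4]`, whose Perron root is `r = (5 + 3√5) / 2`, with
eigenvector `(r - 4, 3)`. If every word is weighted by the entry of its kind, the total weight is
multiplied by exactly `r` at each step, and the number of words differs from it by a bounded factor.
-/

open Asymptotics Filter Finset Topology

section Asymptotics

theorem log_le_log_add_log_of_abs_le {c x y : ℝ} (hx : x ≠ 0) (h : |x| ≤ c * |y|) :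
    Real.log x ≤ Real.log c + Real.log y := by
  have hcy : c * |y| ≠ 0 := ((abs_pos.2 hx).trans_le h).ne'
  calc Real.log x = Real.log |x| := (Real.log_abs x).symm
    _ ≤ Real.log (c * |y|) := Real.log_le_log (abs_pos.2 hx) h
    _ = Real.log c + Real.log y := by
      rw [Real.log_mul (left_ne_zero_of_mul hcy) (right_ne_zero_of_mul hcy), Real.log_abs]

theorem isBigO_log_sub_log_of_isTheta {ι : Type*} {l : Filter ι} {f g : ι → ℝ} (h : f =Θ[l] g) :
    (fun x ↦ Real.log (f x) - Real.log (g x)) =O[l] fun _ ↦ (1 : ℝ) := by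
  obtain ⟨c, hfg⟩ := h.1.bound
  obtain ⟨d, hgf⟩ := h.2.bound
  refine .of_bound (max |Real.log c| |Real.log d|) ?_
  filter_upwards [hfg, hgf, h.eq_zero_iff] with x hf hg hzero
  by_cases hfx : f x = 0
  · simp [hfx, hzero.1 hfx]
  · have upper := log_le_log_add_log_of_abs_le hfx hf
    have lower := log_le_log_add_log_of_abs_le (mt hzero.2 hfx) hg
    rw [Real.norm_eq_abs, norm_one, mul_one, abs_le']
    constructor
    · linarith [le_abs_self (Real.log c), le_max_left |Real.log c| |Real.log d|]
    · linarith [le_abs_self (Real.log d), le_max_right |Real.log c| |Real.log d|]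

theorem abs_natLog_sub_logb_le (b n : ℕ) : |(Nat.log b n : ℝ) - Real.logb b n| ≤ 1 := by
  have hnonneg : 0 ≤ Real.logb b n := (Nat.cast_nonneg _).trans (Real.natLog_le_logb n b)
  rw [← Real.natFloor_logb_natCast, abs_le]
  constructor
  · linarith [Nat.lt_floor_add_one (Real.logb b n)]
  · linarith [Nat.floor_le hnonneg]

theorem tendsto_add_div_add_of_sub_mul_isBigO {u : ℕ → ℝ} {L : ℝ}
    (h : (fun n : ℕ ↦ u n - n * L) =O[atTop] fun _ ↦ (1 : ℝ)) (p q : ℝ) :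
    Tendsto (fun n : ℕ ↦ (u n + p) / (n + q)) atTop (𝓝 L) := by
  have hden : Tendsto (fun n : ℕ ↦ (n : ℝ) + q) atTop atTop :=
    tendsto_atTop_add_const_right _ _ tendsto_natCast_atTop_atTop
  have hnum : (fun n : ℕ ↦ u n - n * L + (p - q * L)) =o[atTop] fun n : ℕ ↦ (n : ℝ) + q :=
    (h.add (isBigO_const_const _ one_ne_zero _)).trans_isLittleO
      (isLittleO_const_left.2 <| .inr <| tendsto_norm_atTop_atTop.comp hden)
  have hlim := hnum.tendsto_div_nhds_zero.add_const L
  rw [zero_add] at hlim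
  refine hlim.congr' ?_
  filter_upwards [hden.eventually_ne_atTop 0] with n hn
  field_simp
  ring

theorem tendsto_natLog_add_div_add_of_isTheta_pow {a : ℕ → ℕ} {r : ℝ}
    (h : (fun n ↦ (a n : ℝ)) =Θ[atTop] fun n ↦ r ^ n) (b : ℕ) (p q : ℝ) :
    Tendsto (fun n : ℕ ↦ ((Nat.log b (a n) : ℝ) + p) / (n + q)) atTop (𝓝 (Real.logb b r)) := by
  have hround : (fun n ↦ (Nat.log b (a n) : ℝ) - Real.logb b (a n)) =O[atTop] fun _ ↦ (1 : ℝ) :=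
    .of_norm_le fun n ↦ abs_natLog_sub_logb_le b (a n)
  have hlogb : (fun n : ℕ ↦ Real.logb b (a n) - n * Real.logb b r) =O[atTop] fun _ ↦ (1 : ℝ) := by
    refine ((isBigO_log_sub_log_of_isTheta h).const_mul_left (Real.log b)⁻¹).congr_left fun n ↦ ?_
    rw [Real.log_pow, Real.logb, Real.logb]
    ring
  refine tendsto_add_div_add_of_sub_mul_isBigO ((hround.add hlogb).congr_left fun n ↦ ?_) p q
  ring

theorem isTheta_pow_of_isTheta_pow_shift {f : ℕ → ℝ} {r : ℝ} (hr : r ≠ 0) (k : ℕ)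
    (h : (fun n ↦ f (n + k)) =Θ[atTop] fun n ↦ r ^ n) : f =Θ[atTop] fun n ↦ r ^ n := by
  have hshift : (fun n ↦ r ^ n) =Θ[atTop] fun n ↦ r ^ (n + k) := by
    simp_rw [pow_add, mul_comm _ (r ^ k)]
    exact (isTheta_const_mul_right (pow_ne_zero k hr)).2 isTheta_rfl
  rw [← map_add_atTop_eq_nat k]
  exact ⟨isBigO_map.2 (h.trans hshift).1, isBigO_map.2 (h.trans hshift).2⟩

theorem exists_forall_le_and_one_le_mul {ι : Type*} [Finite ι] {f : ι → ℝ} (hf : ∀ i, 0 < f i) :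
    ∃ c, ∀ i, f i ≤ c ∧ 1 ≤ c * f i := by
  obtain ⟨c, hc⟩ := (Set.finite_range fun i ↦ max (f i) (f i)⁻¹).bddAbove
  refine ⟨c, fun i ↦ ?_⟩
  have hmax : max (f i) (f i)⁻¹ ≤ c := hc (Set.mem_range_self i)
  exact ⟨(le_max_left _ _).trans hmax,
    (inv_le_iff_one_le_mul₀ (hf i)).1 ((le_max_right _ _).trans hmax)⟩

end Asymptotics

section ConstrainedWords

variable {α R : Type*} {P : α → α → Prop} {T : α → α → α → Prop} {m : ℕ}

variable (P T) in
/-- The constraint defining a local language with windows of length at most `3`: no two consecutive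
letters are in `P` and no three consecutive letters are in `T`. -/
def Avoids (w : Fin m → α) : Prop :=
  (∀ i j : Fin m, (j : ℕ) = i + 1 → ¬ P (w i) (w j)) ∧
    ∀ i j k : Fin m, (j : ℕ) = i + 1 → (k : ℕ) = i + 2 → ¬ T (w i) (w j) (w k)

theorem avoids_cons_iff {a : α} {w : Fin (m + 2) → α} :
    Avoids P T (Fin.cons a w : Fin (m + 3) → α) ↔
      (¬ P a (w 0) ∧ ¬ T a (w 0) (w 1)) ∧ Avoids P T w := by
  let aw : Fin (m + 3) → α := Fin.cons a w
  have pairs : (∀ i j : Fin (m + 3), (j : ℕ) = i + 1 → ¬ P (aw i) (aw j)) ↔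
      ¬ P a (w 0) ∧ ∀ i j : Fin (m + 2), (j : ℕ) = i + 1 → ¬ P (w i) (w j) := by
    simp [aw, Fin.forall_fin_succ (n := m + 2)]
  have triples : (∀ i j k : Fin (m + 3), (j : ℕ) = i + 1 → (k : ℕ) = i + 2 →
        ¬ T (aw i) (aw j) (aw k)) ↔
      ¬ T a (w 0) (w 1) ∧ ∀ i j k : Fin (m + 2), (j : ℕ) = i + 1 → (k : ℕ) = i + 2 →
        ¬ T (w i) (w j) (w k) := by
    simp [aw, Fin.forall_fin_succ (n := m + 2), Fin.forall_fin_succ (n := m + 1)]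
  exact (and_congr pairs triples).trans and_and_and_comm

theorem avoids_pair_iff {x y : α} : Avoids P T ![x, y] ↔ ¬ P x y := by
  simp [Avoids, Fin.forall_fin_two]

theorem Avoids.not_head_pair {w : Fin (m + 2) → α} (hw : Avoids P T w) : ¬ P (w 0) (w 1) :=
  hw.1 0 1 (by simp)

variable [DecidableRel P] [∀ a x y, Decidable (T a x y)]

instance (w : Fin m → α) : Decidable (Avoids P T w) :=
  inferInstanceAs (Decidable (_ ∧ _))

variable [Fintype α]

variable (P T) in
/-- The letters that can be put in front of an admissible word starting with `x, y`. -/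
def leftExtensions (x y : α) : Finset α := {a | ¬ P a x ∧ ¬ T a x y}

variable (P T) in
/-- `g` is an eigenvector with eigenvalue `r` of the transfer matrix, whose states are the pairs of
letters outside `P` and whose transitions prepend a letter. -/
def IsTransferEigenvector [NonUnitalNonAssocSemiring R] (g : α → α → R) (r : R) : Prop :=
  ∀ x y, ¬ P x y → ∑ a ∈ leftExtensions P T x y, g a x = r * g x y

variable (P T) in
/-- The number of words of length `m + 2` avoiding `P` and `T`, each weighted by the value of `g` at
its first two letters. -/
def headWeight [AddCommMonoid R] (g : α → α → R) (m : ℕ) : R :=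
  ∑ w : Fin (m + 2) → α with Avoids P T w, g (w 0) (w 1)

theorem headWeight_succ_eq_sum [AddCommMonoid R] (g : α → α → R) (m : ℕ) :
    headWeight P T g (m + 1) =
      ∑ w : Fin (m + 2) → α with Avoids P T w,
        ∑ a ∈ leftExtensions P T (w 0) (w 1), g a (w 0) := by
  calc headWeight P T g (m + 1)
      = ∑ w : Fin (m + 2) → α, ∑ a,
          if Avoids P T (Fin.cons a w : Fin (m + 3) → α) then g a (w 0) else 0 := by
        rw [headWeight, sum_filter, ← (Fin.consEquiv fun _ : Fin (m + 3) ↦ α).sum_comp,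
          Fintype.sum_prod_type_right]
        rfl
    _ = ∑ w : Fin (m + 2) → α, if Avoids P T w then
          ∑ a, if ¬ P a (w 0) ∧ ¬ T a (w 0) (w 1) then g a (w 0) else 0 else 0 := by
        simp only [avoids_cons_iff, and_comm (b := Avoids P T _), ite_and (Avoids P T _),
          sum_ite_irrel, sum_const_zero]
    _ = ∑ w : Fin (m + 2) → α with Avoids P T w,
          ∑ a ∈ leftExtensions P T (w 0) (w 1), g a (w 0) := by
        simp only [leftExtensions, sum_filter]

theorem headWeight_eq_pow_mul [CommSemiring R] {g : α → α → R} {r : R}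
    (hg : IsTransferEigenvector P T g r) (m : ℕ) :
    headWeight P T g m = r ^ m * headWeight P T g 0 := by
  induction m with
  | zero => simp
  | succ m ih =>
    calc headWeight P T g (m + 1)
        = ∑ w : Fin (m + 2) → α with Avoids P T w, r * g (w 0) (w 1) := by
          rw [headWeight_succ_eq_sum]
          exact sum_congr rfl fun w hw ↦ hg _ _ (mem_filter.1 hw).2.not_head_pair
      _ = r * headWeight P T g m := (mul_sum ..).symm
      _ = r ^ (m + 1) * headWeight P T g 0 := by rw [ih, pow_succ', mul_assoc]

theorem headWeight_isTheta_card {g : α → α → ℝ} (hpos : ∀ x y, ¬ P x y → 0 < g x y) (l : Filter ℕ) :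
    headWeight P T g =Θ[l] fun m ↦ (#{w : Fin (m + 2) → α | Avoids P T w} : ℝ) := by
  obtain ⟨c, hc⟩ := exists_forall_le_and_one_le_mul
    (f := fun p : {p : α × α // ¬ P p.1 p.2} ↦ g p.1.1 p.1.2) fun p ↦ hpos _ _ p.2
  have hc_head {m : ℕ} {w : Fin (m + 2) → α} (hw : w ∈ ({w | Avoids P T w} : Finset _)) :
      g (w 0) (w 1) ≤ c ∧ 1 ≤ c * g (w 0) (w 1) :=
    hc ⟨(w 0, w 1), (mem_filter.1 hw).2.not_head_pair⟩
  have hnonneg (m : ℕ) : 0 ≤ headWeight P T g m :=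
    sum_nonneg fun w hw ↦ (hpos _ _ (mem_filter.1 hw).2.not_head_pair).le
  constructor <;> refine .of_bound c (.of_forall fun m ↦ ?_) <;>
    rw [Real.norm_natCast, Real.norm_of_nonneg (hnonneg m)]
  · calc headWeight P T g m
        ≤ ∑ w : Fin (m + 2) → α with Avoids P T w, c := sum_le_sum fun w hw ↦ (hc_head hw).1
      _ = c * #{w : Fin (m + 2) → α | Avoids P T w} := by rw [sum_const, nsmul_eq_mul, mul_comm]
  · calc (#{w : Fin (m + 2) → α | Avoids P T w} : ℝ)
        = ∑ w : Fin (m + 2) → α with Avoids P T w, 1 := by rw [sum_const, nsmul_one]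
      _ ≤ ∑ w : Fin (m + 2) → α with Avoids P T w, c * g (w 0) (w 1) :=
          sum_le_sum fun w hw ↦ (hc_head hw).2
      _ = c * headWeight P T g m := (mul_sum ..).symm

theorem headWeight_zero_pos {g : α → α → ℝ} (hpos : ∀ x y, ¬ P x y → 0 < g x y)
    (hne : ∃ x y, ¬ P x y) : 0 < headWeight P T g 0 := by
  obtain ⟨x, y, hxy⟩ := hne
  exact sum_pos (fun w hw ↦ hpos _ _ (mem_filter.1 hw).2.not_head_pair)
    ⟨![x, y], by simpa [avoids_pair_iff] using hxy⟩

theorem card_avoids_isTheta_pow {g : α → α → ℝ} {r : ℝ} (hg : IsTransferEigenvector P T g r)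
    (hpos : ∀ x y, ¬ P x y → 0 < g x y) (hne : ∃ x y, ¬ P x y) :
    (fun m ↦ (#{w : Fin (m + 2) → α | Avoids P T w} : ℝ)) =Θ[atTop] fun m ↦ r ^ m := by
  refine (headWeight_isTheta_card hpos atTop).symm.trans ?_
  rw [funext (headWeight_eq_pow_mul hg)]
  simp_rw [mul_comm _ (headWeight P T g 0)]
  exact (isTheta_const_mul_left (headWeight_zero_pos hpos hne).ne').2 isTheta_rfl

end ConstrainedWords

section Eigenvector

/-- The Perron root of the transfer matrix of the OT constraint. -/
noncomputable def perronRoot : ℝ := (5 + 3 * Real.sqrt 5) / 2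

theorem perronRoot_sq : perronRoot ^ 2 = 5 * perronRoot + 5 := by
  have h : Real.sqrt 5 ^ 2 = 5 := Real.sq_sqrt (by norm_num)
  unfold perronRoot
  linear_combination (9 / 4) * h

theorem four_lt_perronRoot : 4 < perronRoot := by
  have h : 1 < Real.sqrt 5 := Real.lt_sqrt_of_sq_lt (by norm_num)
  unfold perronRoot
  linarith

/-- The pairs of letters of the first of the two kinds: every other pair outside `OTpair` has `7`
left extensions. -/
def IsTight (x y : Fin 8) : Prop := #(leftExtensions OTpair OTtriple x y) = 4

instance (x y : Fin 8) : Decidable (IsTight x y) := inferInstanceAs (Decidable (_ = _))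

theorem card_leftExtensions_isTight :
    ∀ x y, ¬ OTpair x y →
      #{a ∈ leftExtensions OTpair OTtriple x y | IsTight a x} = if IsTight x y then 1 else 3 := by
  decide

theorem card_leftExtensions_not_isTight :
    ∀ x y, ¬ OTpair x y →
      #{a ∈ leftExtensions OTpair OTtriple x y | ¬ IsTight a x} = if IsTight x y then 3 else 4 := by
  decide

/-- The Perron eigenvector of the transfer matrix of the OT constraint. -/
noncomputable def perronVector (x y : Fin 8) : ℝ := if IsTight x y then perronRoot - 4 else 3

theorem perronVector_pos (x y : Fin 8) : 0 < perronVector x y := by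
  unfold perronVector
  split_ifs <;> linarith [four_lt_perronRoot]

theorem isTransferEigenvector_perronVector :
    IsTransferEigenvector OTpair OTtriple perronVector perronRoot := by
  intro x y hxy
  simp only [perronVector, sum_ite, sum_const, nsmul_eq_mul, card_leftExtensions_isTight x y hxy,
    card_leftExtensions_not_isTight x y hxy]
  split_ifs
  · push_cast
    linear_combination -perronRoot_sq
  · push_cast
    ring

theorem N8_add_two (m : ℕ) :
    N8 (m + 2) = #{w : Fin (m + 2) → Fin 8 | Avoids OTpair OTtriple w} := by
  rw [N8, if_neg (Nat.succ_ne_zero _)]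
  congr

theorem N8_isTheta_perronRoot_pow :
    (fun m ↦ (N8 m : ℝ)) =Θ[atTop] fun m ↦ perronRoot ^ m := by
  have hroot : perronRoot ≠ 0 := (four_lt_perronRoot.trans' four_pos).ne'
  refine isTheta_pow_of_isTheta_pow_shift hroot 2 ?_
  simp_rw [N8_add_two]
  exact card_avoids_isTheta_pow isTransferEigenvector_perronVector
    (fun x y _ ↦ perronVector_pos x y) ⟨0, 0, by decide⟩

end Eigenvector

theorem ot_loco_rate_tendsto_capacity :
    Filter.Tendsto
      (fun m : ℕ => ((Nat.log 2 (N8 m) : ℝ) + 3) / ((m : ℝ) + 2)) Filter.atTop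
      (nhds (Real.logb 2 ((5 + 3 * Real.sqrt 5) / 2))) :=
  tendsto_natLog_add_div_add_of_isTheta_pow N8_isTheta_perronRoot_pow 2 3 2

end OTLOCO
end
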